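/- Let G be a graph of odd order p and size e with χ(G) = χ_la(G). Suppose there exists a local antimagic labeling f of G with c(f) = χ(G). Let m ≥ 3 be an odd integer. If for every vertex u of G, f⁺(u) is not equal to any of (p−m)(2e+pm+1)/2 + 2(e+pm) + m, (p−m)(2e+pm+1)/2 + 2(e+pm) + m + 1, and (p−m)(2e+pm+1)/2 + 2(e+pm) + (3m+1)/2, then χ_la(G ∨ C_m) = χ_la(G) + 3. -/

import Mathlib

open Finset SimpleGraph
open scoped Classical

/-- The induced vertex label (weight) of `x`: the sum of `f` over all edges incident to `x`. -/
noncomputable def vertexWeight {V : Type*} [Fintype V] (G : SimpleGraph V)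
    (f : Sym2 V → ℕ) (x : V) : ℕ :=
  ∑ e ∈ G.edgeFinset.filter (fun e => x ∈ e), f e

/-- `f` is a local antimagic labeling of `G`: it restricts to a bijection from the edge set of
`G` onto `{1, …, q}` (where `q` is the number of edges), and adjacent vertices get distinct
induced vertex labels. -/
def IsLocalAntimagic {V : Type*} [Fintype V] (G : SimpleGraph V) (f : Sym2 V → ℕ) : Prop :=
  Set.BijOn f G.edgeSet (Set.Icc 1 G.edgeSet.ncard) ∧
  ∀ ⦃x y : V⦄, G.Adj x y → vertexWeight G f x ≠ vertexWeight G f y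

/-- The number of distinct induced vertex labels, `c(f)`. -/
noncomputable def colorCount {V : Type*} [Fintype V] (G : SimpleGraph V)
    (f : Sym2 V → ℕ) : ℕ :=
  (Finset.univ.image (vertexWeight G f)).card

/-- The local antimagic chromatic number `χ_la(G)`. -/
noncomputable def chiLA {V : Type*} [Fintype V] (G : SimpleGraph V) : ℕ :=
  sInf { n | ∃ f : Sym2 V → ℕ, IsLocalAntimagic G f ∧ colorCount G f = n }

/-- The join `G ∨ H` of two vertex-disjoint graphs. -/
def joinG {α β : Type*} (G : SimpleGraph α) (H : SimpleGraph β) : SimpleGraph (α ⊕ β) :=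
  SimpleGraph.fromRel (fun x y =>
    (∃ a b, x = Sum.inl a ∧ y = Sum.inl b ∧ G.Adj a b) ∨
    (∃ a b, x = Sum.inr a ∧ y = Sum.inr b ∧ H.Adj a b) ∨
    (∃ a b, x = Sum.inl a ∧ y = Sum.inr b))

/-- A centred magic rectangle with `p` rows and columns indexed by `[-k, k]`. -/
def MagicZ (p k : ℕ) (M : ℕ → ℤ → ℤ) : Prop :=
  (∀ v : ℤ, 2 * |v| < (p : ℤ) * (2 * k + 1) →
    ∃ i < p, ∃ l : ℤ, -(k : ℤ) ≤ l ∧ l ≤ k ∧ M i l = v) ∧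
  (∀ i < p, ∑ l ∈ Finset.Icc (-(k : ℤ)) k, M i l = 0) ∧
  (∀ l : ℤ, -(k : ℤ) ≤ l → l ≤ k → ∑ i ∈ Finset.range p, M i l = 0)

/-- Row `0` still has the untouched pairs with index at least `n`. -/
def PairsFrom (n k : ℕ) (M : ℕ → ℤ → ℤ) : Prop :=
  ∀ i : ℤ, (n : ℤ) ≤ i → i + 1 ≤ k → M 0 i = i ∧ M 0 (-(i + 1)) = -(i + 1)

lemma sum_sym (k : ℕ) (F : ℤ → ℤ) :
    ∑ l ∈ Finset.Icc (-(k : ℤ)) k, F l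
      = F 0 + ∑ i ∈ Finset.range k, (F ((i : ℤ) + 1) + F (-((i : ℤ) + 1))) := by
  induction k with
  | zero => simp
  | succ k ih =>
    have h : Finset.Icc (-((k + 1 : ℕ) : ℤ)) ((k + 1 : ℕ) : ℤ)
        = insert ((k : ℤ) + 1) (insert (-((k : ℤ) + 1)) (Finset.Icc (-(k : ℤ)) k)) := by
      ext x
      simp only [Finset.mem_Icc, Finset.mem_insert]
      push_cast
      omega
    rw [h, Finset.sum_insert, Finset.sum_insert, ih, Finset.sum_range_succ]
    · ring
    · simp
    · simp only [Finset.mem_Icc, Finset.mem_insert]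
      omega

lemma exists_eps (k n : ℕ) (hk : 3 ≤ k) (hn : 1 ≤ n) (hnk : n + 1 ≤ k) :
    ∃ ε : ℤ → ℤ, (∀ l, ε l = 1 ∨ ε l = -1) ∧ (∀ l, ε (-l) = ε l) ∧ ε n = 1 ∧ ε (n + 1) = 1 ∧
      ∑ l ∈ Finset.Icc (-(k : ℤ)) k, ε l = 1 := by
  have hcard : (((Finset.range k).erase (n - 1)).erase n).card = k - 2 := by
    rw [Finset.card_erase_of_mem, Finset.card_erase_of_mem, Finset.card_range]
    · omega
    · simp; omega
    · simp; omega
  obtain ⟨Q, hQ, hQc⟩ := Finset.exists_subset_card_eq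
    (s := ((Finset.range k).erase (n - 1)).erase n) (n := k / 2) (by omega)
  have hQ1 : n - 1 ∉ Q := fun h => by have := hQ h; simp at this
  have hQ2 : n ∉ Q := fun h => by have := hQ h; simp at this
  have hQ3 : Q ⊆ Finset.range k := fun x h => by
    have := hQ h
    simp only [Finset.mem_erase] at this
    exact this.2.2
  refine ⟨fun l => if l = 0 then (if k % 2 = 1 then -1 else 1) else
    if l.natAbs - 1 ∈ Q then -1 else 1, ?_, ?_, ?_, ?_, ?_⟩
  · intro l
    dsimp only
    split_ifs <;> simp
  · intro l
    simp
  · have : ((n : ℤ)) ≠ 0 := by omega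
    simp [hQ1]
    omega
  · have : ((n : ℤ) + 1) ≠ 0 := by omega
    have h2 : ((n : ℤ) + 1).natAbs - 1 = n := by omega
    simp only [this, h2, hQ2, if_false]
  · rw [sum_sym]
    have : ∀ i ∈ Finset.range k, ((if ((i : ℤ) + 1) = 0 then (if k % 2 = 1 then (-1 : ℤ) else 1) else
        if ((i : ℤ) + 1).natAbs - 1 ∈ Q then -1 else 1) +
        (if (-((i : ℤ) + 1)) = 0 then (if k % 2 = 1 then (-1 : ℤ) else 1) else
        if (-((i : ℤ) + 1)).natAbs - 1 ∈ Q then -1 else 1)) = 2 - (if i ∈ Q then 4 else 0) := by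
      intro i _
      have h1 : ((i : ℤ) + 1) ≠ 0 := by omega
      have h2 : (-((i : ℤ) + 1)) ≠ 0 := by omega
      have h3 : ((i : ℤ) + 1).natAbs - 1 = i := by omega
      have h4 : (-((i : ℤ) + 1)).natAbs - 1 = i := by omega
      simp only [h1, h2, h3, h4, if_false]
      split_ifs <;> norm_num
    rw [Finset.sum_congr rfl this, Finset.sum_sub_distrib, Finset.sum_ite_mem,
      Finset.inter_eq_right.mpr hQ3]
    simp [hQc]
    split_ifs <;> omega

lemma magic_step (k n : ℕ) (hk : 3 ≤ k) (hn : 1 ≤ n) (hnk : n + 1 ≤ k) (M : ℕ → ℤ → ℤ)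
    (hM : MagicZ (2 * n + 1) k M) (hP : PairsFrom n k M) :
    ∃ M', MagicZ (2 * (n + 1) + 1) k M' ∧ PairsFrom (n + 1) k M' := by
  obtain ⟨ε, he1, he2, he3, he4, he5⟩ := exists_eps k n hk hn hnk
  obtain ⟨hs, hr, hc⟩ := hM
  obtain ⟨c, hcdef⟩ : ∃ c : ℤ, c = 2 * (n * k) + n + 2 * k + 1 := ⟨_, rfl⟩
  obtain ⟨z, hz⟩ : ∃ z : ℤ → ℤ, ∀ l, z l = if l = n + 1 ∨ l = -(n + 1) then -l else l :=
    ⟨_, fun _ => rfl⟩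
  obtain ⟨x, hx⟩ : ∃ x : ℤ → ℤ, ∀ l, x l = ε l * (c + z l) := ⟨_, fun _ => rfl⟩
  have hzodd : ∀ l, z (-l) = -z l := by
    intro l
    rw [hz, hz]
    split_ifs <;> omega
  have hzz : ∀ w, z (z w) = w := by
    intro l
    rw [hz, hz]
    split_ifs <;> omega
  have hzr : ∀ w : ℤ, -(k : ℤ) ≤ w → w ≤ k → -(k : ℤ) ≤ z w ∧ z w ≤ k := by
    intro w h1 h2
    rw [hz]
    split_ifs <;> omega
  have hx1 : x n = c + n := by
    rw [hx, he3, hz, if_neg (by omega)]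
    ring
  have hx2 : x (-((n : ℤ) + 1)) = c + n + 1 := by
    rw [hx, he2, he4, hz, if_pos (by omega)]
    ring
  have hxs : ∑ l ∈ Finset.Icc (-(k : ℤ)) k, x l = c := by
    have h1 : ∑ l ∈ Finset.Icc (-(k : ℤ)) k, ε l * z l = 0 := by
      rw [sum_sym]
      have h0 : z 0 = 0 := by rw [hz]; split_ifs <;> simp
      rw [h0, Finset.sum_eq_zero]
      · simp
      · intro i _
        rw [he2, hzodd]
        ring
    simp only [hx, mul_add, Finset.sum_add_distrib, h1, ← Finset.sum_mul, he5]
    ring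
  obtain ⟨d1, hd1⟩ : ∃ d : ℤ → ℤ, ∀ l, d l = if l = n then x n - n else 0 := ⟨_, fun _ => rfl⟩
  obtain ⟨d2, hd2⟩ : ∃ d : ℤ → ℤ, ∀ l, d l =
    if l = -((n : ℤ) + 1) then -x (-((n : ℤ) + 1)) + (n + 1) else 0 := ⟨_, fun _ => rfl⟩
  have hd1s : ∑ l ∈ Finset.Icc (-(k : ℤ)) k, d1 l = c := by
    simp only [hd1]
    rw [Finset.sum_ite_eq', if_pos (by rw [Finset.mem_Icc]; omega), hx1]
    ring
  have hd2s : ∑ l ∈ Finset.Icc (-(k : ℤ)) k, d2 l = -c := by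
    simp only [hd2]
    rw [Finset.sum_ite_eq', if_pos (by rw [Finset.mem_Icc]; omega), hx2]
    ring
  have hPn := hP n le_rfl (by omega)
  obtain ⟨M', hM'⟩ : ∃ M' : ℕ → ℤ → ℤ, ∀ i l, M' i l =
      if i < 2 * n + 1 then M i l + (if i = 0 then d1 l + d2 l else 0)
      else if i = 2 * n + 1 then x l - d1 l else - x l - d2 l := ⟨_, fun _ _ => rfl⟩
  have hA : ∀ i l, i < 2 * n + 1 → M' i l = M i l + (if i = 0 then d1 l + d2 l else 0) := by
    intro i l h
    rw [hM', if_pos h]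
  have hA0 : ∀ l, M' 0 l = M 0 l + (d1 l + d2 l) := by
    intro l
    rw [hA 0 l (by omega), if_pos rfl]
  have hB : ∀ l, M' (2 * n + 1) l = x l - d1 l := by
    intro l
    rw [hM', if_neg (by omega), if_pos rfl]
  have hC : ∀ l, M' (2 * n + 2) l = - x l - d2 l := by
    intro l
    rw [hM', if_neg (by omega), if_neg (by omega)]
  refine ⟨M', ⟨?_, ?_, ?_⟩, ?_⟩
  · intro v hv
    by_cases hv1 : 2 * |v| < ((2 * n + 1 : ℕ) : ℤ) * (2 * k + 1)
    · obtain ⟨i, hi, l, hl1, hl2, h⟩ := hs v hv1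
      by_cases hi0 : i = 0
      · subst hi0
        by_cases hln : l = n
        · subst hln
          refine ⟨2 * n + 1, by omega, n, hl1, hl2, ?_⟩
          rw [hB, hd1, if_pos rfl, ← h, hPn.1]
          ring
        · by_cases hln2 : l = -((n : ℤ) + 1)
          · subst hln2
            refine ⟨2 * n + 2, by omega, _, hl1, hl2, ?_⟩
            rw [hC, hd2, if_pos rfl, ← h, hPn.2]
            ring
          · refine ⟨0, by omega, l, hl1, hl2, ?_⟩
            rw [hA0, hd1, hd2, if_neg hln, if_neg hln2, h]
            simp
      · refine ⟨i, by omega, l, hl1, hl2, ?_⟩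
        rw [hA _ _ hi, if_neg hi0, h, add_zero]
    · -- new values
      have hb : c - k ≤ |v| ∧ |v| ≤ c + k := by
        push_cast at hv hv1
        constructor
        · have : ((2 * n + 1 : ℤ)) * (2 * k + 1) = 2 * (c - k) - 1 := by rw [hcdef]; ring
          omega
        · have : (2 * ((n : ℤ) + 1) + 1) * (2 * k + 1) = 2 * (c + k) + 1 := by rw [hcdef]; ring
          omega
      obtain ⟨l, hl⟩ : ∃ l, l = z (|v| - c) := ⟨_, rfl⟩
      have hlr := hzr (|v| - c) (by omega) (by omega)
      rw [← hl] at hlr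
      have hxl : x l = |v| ∨ x l = -|v| := by
        rw [hx, hl, hzz]
        rcases he1 (z (|v| - c)) with h | h <;> rw [h]
        · left; ring
        · right; ring
      have hxv : v = x l ∨ v = - x l := by
        rcases abs_choice v with h | h <;> rw [h] at hxl <;> omega
      rcases hxv with h | h
      · by_cases hln : l = n
        · refine ⟨0, by omega, l, hlr.1, hlr.2, ?_⟩
          rw [hA0, hd1, hd2, if_pos hln, if_neg (by omega), h, hln, hPn.1]
          ring
        · refine ⟨2 * n + 1, by omega, l, hlr.1, hlr.2, ?_⟩
          rw [hB, hd1, if_neg hln, h, sub_zero]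
      · by_cases hln : l = -((n : ℤ) + 1)
        · refine ⟨0, by omega, l, hlr.1, hlr.2, ?_⟩
          rw [hA0, hd1, hd2, if_pos hln, if_neg (by omega), h, hln, hPn.2]
          ring
        · refine ⟨2 * n + 2, by omega, l, hlr.1, hlr.2, ?_⟩
          rw [hC, hd2, if_neg hln, h, sub_zero]
  · intro i hi
    rcases (by omega : i < 2 * n + 1 ∨ i = 2 * n + 1 ∨ i = 2 * n + 2) with h | h | h
    · simp only [hA i _ h, Finset.sum_add_distrib, hr i h]
      by_cases h0 : i = 0
      · simp only [h0, if_true, Finset.sum_add_distrib, hd1s, hd2s]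
        ring
      · simp [h0]
    · subst h
      simp only [hB, Finset.sum_sub_distrib, hxs, hd1s]
      ring
    · subst h
      simp only [hC, Finset.sum_sub_distrib, Finset.sum_neg_distrib, hxs, hd2s]
      ring
  · intro l hl1 hl2
    rw [show 2 * (n + 1) + 1 = 2 * n + 1 + 1 + 1 by ring, Finset.sum_range_succ,
      Finset.sum_range_succ, hB, hC]
    rw [Finset.sum_congr rfl (fun i hi => hA i l (Finset.mem_range.mp hi)),
      Finset.sum_add_distrib, hc l hl1 hl2, Finset.sum_ite_eq', if_pos (by simp)]
    ring
  · intro i hi hik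
    push_cast at hi
    have := hP i (by omega) hik
    rw [hA0, hA0, hd1, hd2, hd1, hd2, if_neg (by omega),
      if_neg (by omega), if_neg (by omega), if_neg (by omega), this.1, this.2]
    simp



lemma magic_base (k : ℕ) (hk : 1 ≤ k) (X Y : Finset ℕ) (hX : X ⊆ Finset.range k)
    (hY : Y ⊆ Finset.range k) (hXY : Disjoint X Y) (hk1 : k - 1 ∈ X ∨ k - 1 ∈ Y)
    (hsum : ∑ i ∈ X, (2 * (k : ℤ) + 5 + 3 * i) + (2 * (Y.card : ℤ) - k) * (4 * k + 3) = 0) :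
    ∃ M, MagicZ 3 k M ∧ PairsFrom 1 k M := by
  obtain ⟨S, hS⟩ : ∃ S : ℤ → Prop, ∀ l, S l ↔
    (l = 0 ∨ l.natAbs - 1 ∈ Y ∨ (0 < l ∧ l.natAbs - 1 ∈ X)) := ⟨_, fun _ => Iff.rfl⟩
  obtain ⟨v, hv⟩ : ∃ v : ℤ → ℤ, ∀ l, v l = if l < 0 then l + k + 1 else l - k :=
    ⟨_, fun _ => rfl⟩
  obtain ⟨T, hT⟩ : ∃ T : ℤ → ℤ, ∀ l, T l =
    if S l then 2 * k + 1 + v l else -(2 * k + 1) - l - v l := ⟨_, fun _ => rfl⟩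
  have hS0 : S 0 := by rw [hS]; simp
  have hSk : S k := by
    rw [hS, Int.natAbs_natCast]
    rcases hk1 with h | h
    · right; right; exact ⟨by omega, h⟩
    · right; left; exact h
  have hTs : ∑ l ∈ Finset.Icc (-(k : ℤ)) k, T l = k + 1 := by
    rw [sum_sym]
    have h0 : T 0 = k + 1 := by
      rw [hT, if_pos hS0, hv, if_neg (by omega)]
      ring
    have hi : ∀ i ∈ Finset.range k, T ((i : ℤ) + 1) + T (-((i : ℤ) + 1)) =
        -(4 * k + 3) + ((if i ∈ Y then 2 * (4 * (k : ℤ) + 3) else 0) +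
          (if i ∈ X then (2 * (k : ℤ) + 5 + 3 * i) else 0)) := by
      intro i _
      have h3 : ((i : ℤ) + 1).natAbs - 1 = i := by omega
      have h4 : (-((i : ℤ) + 1)).natAbs - 1 = i := by omega
      have e1 : S ((i : ℤ) + 1) ↔ (i ∈ Y ∨ i ∈ X) := by
        rw [hS, h3]
        have h1 : ((i : ℤ) + 1) ≠ 0 := by omega
        have h2 : 0 < ((i : ℤ) + 1) := by omega
        simp only [h1, h2, false_or, true_and]
      have e2 : S (-((i : ℤ) + 1)) ↔ i ∈ Y := by
        rw [hS, h4]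
        have h1 : -((i : ℤ) + 1) ≠ 0 := by omega
        have h2 : ¬ 0 < -((i : ℤ) + 1) := by omega
        simp only [h1, h2, false_or, false_and, or_false]
      rw [hT, hT, hv, hv, if_neg (by omega : ¬ ((i : ℤ) + 1 < 0)),
        if_pos (by omega : (-((i : ℤ) + 1) < 0))]
      simp only [e1, e2]
      by_cases hy : i ∈ Y
      · have hx : i ∉ X := fun h => Finset.disjoint_left.mp hXY h hy
        simp only [hy, hx, if_true, if_false, true_or]
        ring
      · by_cases hx : i ∈ X
        · simp only [hy, hx, if_true, if_false, or_true]
          ring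
        · simp only [hy, hx, if_false, or_false]
          ring
    rw [Finset.sum_congr rfl hi, Finset.sum_add_distrib, Finset.sum_add_distrib,
      Finset.sum_ite_mem, Finset.sum_ite_mem, Finset.inter_eq_right.mpr hX,
      Finset.inter_eq_right.mpr hY, h0]
    simp only [Finset.sum_const, Finset.card_range, nsmul_eq_mul]
    linarith
  obtain ⟨d1, hd1⟩ : ∃ d : ℤ → ℤ, ∀ l, d l = if l = k then (k : ℤ) + 1 else 0 := ⟨_, fun _ => rfl⟩
  obtain ⟨d2, hd2⟩ : ∃ d : ℤ → ℤ, ∀ l, d l = if l = 0 then -((k : ℤ) + 1) else 0 :=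
    ⟨_, fun _ => rfl⟩
  have hd1s : ∑ l ∈ Finset.Icc (-(k : ℤ)) k, d1 l = k + 1 := by
    simp only [hd1]
    rw [Finset.sum_ite_eq', if_pos (by rw [Finset.mem_Icc]; omega)]
  have hd2s : ∑ l ∈ Finset.Icc (-(k : ℤ)) k, d2 l = -(k + 1) := by
    simp only [hd2]
    rw [Finset.sum_ite_eq', if_pos (by rw [Finset.mem_Icc]; omega)]
  have hls : ∑ l ∈ Finset.Icc (-(k : ℤ)) k, l = 0 := by
    rw [sum_sym k (fun l => l)]
    simp
  obtain ⟨M, hM0, hM1, hM2⟩ : ∃ M : ℕ → ℤ → ℤ, (∀ l, M 0 l = l + (d1 l + d2 l)) ∧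
      (∀ l, M 1 l = T l - d1 l) ∧ (∀ l, M 2 l = -l - T l - d2 l) :=
    ⟨fun i l => if i = 0 then l + (d1 l + d2 l) else if i = 1 then T l - d1 l
      else -l - T l - d2 l, fun _ => rfl, fun _ => rfl, fun _ => rfl⟩
  refine ⟨M, ⟨?_, ?_, ?_⟩, ?_⟩
  · intro t ht
    -- a helper placing the values `T l` and `-l - T l`
    have hput1 : ∀ l : ℤ, -(k : ℤ) ≤ l → l ≤ k →
        ∃ i < 3, ∃ l' : ℤ, -(k : ℤ) ≤ l' ∧ l' ≤ k ∧ M i l' = T l := by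
      intro l h1 h2
      by_cases hl : l = k
      · refine ⟨0, by omega, l, h1, h2, ?_⟩
        rw [hM0, hd1, hd2, if_pos hl, if_neg (by omega), hl, hT, if_pos hSk, hv,
          if_neg (by omega)]
        ring
      · refine ⟨1, by omega, l, h1, h2, ?_⟩
        rw [hM1, hd1, if_neg hl, sub_zero]
    have hput2 : ∀ l : ℤ, -(k : ℤ) ≤ l → l ≤ k →
        ∃ i < 3, ∃ l' : ℤ, -(k : ℤ) ≤ l' ∧ l' ≤ k ∧ M i l' = -l - T l := by
      intro l h1 h2
      by_cases hl : l = 0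
      · refine ⟨0, by omega, l, h1, h2, ?_⟩
        rw [hM0, hd1, hd2, if_pos hl, if_neg (by omega), hl, hT, if_pos hS0, hv,
          if_neg (by omega)]
        ring
      · refine ⟨2, by omega, l, h1, h2, ?_⟩
        rw [hM2, hd2, if_neg hl, sub_zero]
    have hputP : ∀ l : ℤ, -(k : ℤ) ≤ l → l ≤ k → 2 * k + 1 + v l = t →
        ∃ i < 3, ∃ l' : ℤ, -(k : ℤ) ≤ l' ∧ l' ≤ k ∧ M i l' = t := by
      intro l h1 h2 h3
      by_cases hs : S l
      · have := hput1 l h1 h2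
        rwa [hT, if_pos hs, h3] at this
      · have := hput2 l h1 h2
        rwa [hT, if_neg hs, show -l - (-(2 * (k : ℤ) + 1) - l - v l) = t by rw [← h3]; ring] at this
    have hputN : ∀ l : ℤ, -(k : ℤ) ≤ l → l ≤ k → -(2 * k + 1) - l - v l = t →
        ∃ i < 3, ∃ l' : ℤ, -(k : ℤ) ≤ l' ∧ l' ≤ k ∧ M i l' = t := by
      intro l h1 h2 h3
      by_cases hs : S l
      · have := hput2 l h1 h2
        rwa [hT, if_pos hs, show -l - (2 * (k : ℤ) + 1 + v l) = t by rw [← h3]; ring] at this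
      · have := hput1 l h1 h2
        rwa [hT, if_neg hs, h3] at this
    push_cast at ht
    have htu : t ≤ 3 * k + 1 := by have := le_abs_self t; omega
    have htl : -(3 * k + 1) ≤ t := by have := neg_abs_le t; omega
    by_cases h1 : t ≤ k
    · by_cases h2 : -(k : ℤ) ≤ t
      · by_cases h3 : t = 0
        · refine ⟨2, by omega, 0, by omega, by omega, ?_⟩
          rw [hM2, hd2, if_pos rfl, hT, if_pos hS0, hv, if_neg (by omega), h3]
          ring
        · by_cases h4 : t = k
          · refine ⟨1, by omega, k, by omega, by omega, ?_⟩
            rw [hM1, hd1, if_pos rfl, hT, if_pos hSk, hv, if_neg (by omega), h4]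
            ring
          · refine ⟨0, by omega, t, h2, h1, ?_⟩
            rw [hM0, hd1, hd2, if_neg h3, if_neg h4]
            ring
      · by_cases hpar : (k - (t + (2 * k + 1))) % 2 = 0
        · refine hputN ((k - (t + (2 * k + 1))) / 2) (by omega) (by omega) ?_
          rw [hv, if_neg (by omega)]
          omega
        · refine hputN (-((t + (2 * k + 1) + k + 1) / 2)) (by omega) (by omega) ?_
          rw [hv, if_pos (by omega)]
          omega
    · by_cases h2 : 1 ≤ t - (2 * k + 1)
      · refine hputP (t - (2 * k + 1) - k - 1) (by omega) (by omega) ?_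
        rw [hv, if_pos (by omega)]
        ring
      · refine hputP (t - (2 * k + 1) + k) (by omega) (by omega) ?_
        rw [hv, if_neg (by omega)]
        ring
  · intro i hi
    rcases (by omega : i = 0 ∨ i = 1 ∨ i = 2) with h | h | h <;> subst h
    · simp only [hM0, Finset.sum_add_distrib, hls, hd1s, hd2s]
      ring
    · simp only [hM1, Finset.sum_sub_distrib, hTs, hd1s]
      ring
    · have hls2 : ∑ l ∈ Finset.Icc (-(k : ℤ)) k, -l = 0 := by
        rw [sum_sym k (fun l => -l)]
        simp
      simp only [hM2, Finset.sum_sub_distrib, hls2, hTs, hd2s]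
      ring
  · intro l _ _
    simp only [Finset.sum_range_succ, Finset.sum_range_zero, hM0, hM1, hM2]
    ring
  · intro i hi hik
    push_cast at hi
    rw [hM0, hM0, hd1, hd2, hd1, hd2, if_neg (by omega), if_neg (by omega), if_neg (by omega),
      if_neg (by omega)]
    simp

lemma magic_base_even (k : ℕ) (hk : 1 ≤ k) (h : k % 2 = 0) :
    ∃ M, MagicZ 3 k M ∧ PairsFrom 1 k M := by
  refine magic_base k hk ∅ (Finset.Ico (k / 2) k) (by simp) ?_ (by simp) ?_ ?_
  · intro x hx
    simp at hx ⊢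
    omega
  · right
    simp
    omega
  · have : 2 * (((Finset.Ico (k / 2) k).card : ℕ) : ℤ) - k = 0 := by
      rw [Nat.card_Ico]
      omega
    rw [this]
    simp

lemma magic_base_odd (k : ℕ) (hk : 5 ≤ k) (h : k % 2 = 1) :
    ∃ M, MagicZ 3 k M ∧ PairsFrom 1 k M := by
  have hX : ({1, k - 2, k - 1} : Finset ℕ) ⊆ Finset.range k := by
    intro x hx
    simp at hx ⊢
    omega
  have hXc : ({1, k - 2, k - 1} : Finset ℕ).card = 3 := by
    rw [Finset.card_eq_three]
    exact ⟨1, k - 2, k - 1, by omega, by omega, by omega, rfl⟩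
  obtain ⟨Y, hY, hYc⟩ := Finset.exists_subset_card_eq
    (s := Finset.range k \ {1, k - 2, k - 1}) (n := (k - 3) / 2) (by
      rw [Finset.card_sdiff_of_subset hX, hXc, Finset.card_range]
      omega)
  refine magic_base k (by omega) {1, k - 2, k - 1} Y hX (hY.trans Finset.sdiff_subset) ?_ ?_ ?_
  · exact Finset.disjoint_of_subset_right hY Finset.disjoint_sdiff
  · left
    simp
  · rw [Finset.sum_insert, Finset.sum_insert, Finset.sum_singleton, hYc]
    · obtain ⟨a, rfl⟩ : ∃ a, k = 2 * a + 3 := ⟨(k - 3) / 2, by omega⟩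
      have h1 : (2 * a + 3 - 3) / 2 = a := by omega
      have h2 : 2 * a + 3 - 2 = 2 * a + 1 := by omega
      have h3 : 2 * a + 3 - 1 = 2 * a + 2 := by omega
      rw [h1, h2, h3]
      push_cast
      ring
    · simp
      omega
    · simp
      omega

/-- An explicit 3 × 7 rectangle. -/
def mat37 : List (List ℤ) :=
  [[-3, -2, 0, -1, 1, 2, 3], [7, 8, 5, -9, -10, 6, -7], [-4, -6, -5, 10, 9, -8, 4]]

lemma magic_base_three : ∃ M, MagicZ 3 3 M ∧ PairsFrom 1 3 M := by
  refine ⟨fun i l => (mat37.getD i []).getD (l + 3).toNat 0, ⟨?_, ?_, ?_⟩, ?_⟩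
  · intro v hv
    have h1 : v ≤ 10 := by have := le_abs_self v; push_cast at hv; omega
    have h2 : -10 ≤ v := by have := neg_abs_le v; push_cast at hv; omega
    have key : ∀ v ∈ Finset.Icc (-10 : ℤ) 10, ∃ i ∈ Finset.range 3,
      ∃ l ∈ Finset.Icc (-3 : ℤ) 3, (mat37.getD i []).getD (l + 3).toNat 0 = v := by decide
    obtain ⟨i, hi, l, hl, h⟩ := key v (by rw [Finset.mem_Icc]; omega)
    rw [Finset.mem_Icc] at hl
    exact ⟨i, by simpa using hi, l, hl.1, hl.2, h⟩
  · decide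
  · intro l h1 h2
    have key : ∀ l ∈ Finset.Icc (-3 : ℤ) 3,
      ∑ i ∈ Finset.range 3, (mat37.getD i []).getD (l + 3).toNat 0 = 0 := by decide
    exact key l (by rw [Finset.mem_Icc]; exact ⟨h1, h2⟩)
  · intro i h1 h2
    push_cast at h1 h2
    have : i = 1 ∨ i = 2 := by omega
    rcases this with rfl | rfl <;> decide

lemma magic_base_all (k : ℕ) (hk : 2 ≤ k) : ∃ M, MagicZ 3 k M ∧ PairsFrom 1 k M := by
  by_cases h : k % 2 = 0
  · exact magic_base_even k (by omega) h
  · by_cases h3 : k = 3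
    · subst h3
      exact magic_base_three
    · exact magic_base_odd k (by omega) (by omega)

lemma magic_all (k n : ℕ) (hk : 3 ≤ k) (hn : 1 ≤ n) (hnk : n ≤ k) :
    ∃ M, MagicZ (2 * n + 1) k M ∧ PairsFrom n k M := by
  induction n, hn using Nat.le_induction with
  | base => exact magic_base_all k (by omega)
  | succ n hn ih =>
    obtain ⟨M, h1, h2⟩ := ih (by omega)
    exact magic_step k n hk hn hnk M h1 h2

/-- A centred magic rectangle indexed by `Fin p × Fin m`. -/
def MagicF (p m : ℕ) (M : Fin p → Fin m → ℤ) : Prop :=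
  (∀ v : ℤ, 2 * |v| < (p : ℤ) * m → ∃ i j, M i j = v) ∧
  (∀ i, ∑ j, M i j = 0) ∧ (∀ j, ∑ i, M i j = 0)

lemma magicF_of_magicZ (p k : ℕ) (M : ℕ → ℤ → ℤ) (h : MagicZ p k M) :
    MagicF p (2 * k + 1) (fun i j => M i ((j : ℤ) - k)) := by
  obtain ⟨h1, h2, h3⟩ := h
  refine ⟨?_, ?_, ?_⟩
  · intro v hv
    push_cast at hv
    obtain ⟨i, hi, l, hl1, hl2, h⟩ := h1 v hv
    refine ⟨⟨i, hi⟩, ⟨(l + k).toNat, by omega⟩, ?_⟩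
    have : (((l + k).toNat : ℕ) : ℤ) - k = l := by omega
    simp only [this, h]
  · intro i
    rw [← h2 i i.2]
    refine Finset.sum_bij (fun j _ => (j : ℤ) - k) ?_ ?_ ?_ ?_
    · intro j _
      rw [Finset.mem_Icc]
      omega
    · intro a _ b _ hab
      ext
      omega
    · intro l hl
      rw [Finset.mem_Icc] at hl
      exact ⟨⟨(l + k).toNat, by omega⟩, Finset.mem_univ _, by simp; omega⟩
    · intro _ _
      rfl
  · intro j
    have := h3 ((j : ℤ) - k) (by omega) (by omega)
    rw [Finset.sum_range] at this
    exact this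

/-- Explicit 3 × 3 square. -/
def sq3 : Fin 3 → Fin 3 → ℤ := ![![0, 2, -2], ![4, -3, -1], ![-4, 1, 3]]

/-- Explicit 5 × 5 square. -/
def sq5 : Fin 5 → Fin 5 → ℤ :=
  ![![0, 4, 8, -8, -4], ![6, 10, -11, -7, 2], ![12, -9, -5, -1, 3], ![-12, -3, 1, 5, 9],
    ![-6, -2, 7, 11, -10]]

lemma magic_sq3 : MagicF 3 3 sq3 := by
  refine ⟨?_, by decide, by decide⟩
  intro v hv
  have h1 : v ≤ 4 := by have := le_abs_self v; push_cast at hv; omega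
  have h2 : -4 ≤ v := by have := neg_abs_le v; push_cast at hv; omega
  have key : ∀ v ∈ Finset.Icc (-4 : ℤ) 4, ∃ i j, sq3 i j = v := by decide
  exact key v (by rw [Finset.mem_Icc]; omega)

lemma magic_sq5 : MagicF 5 5 sq5 := by
  refine ⟨?_, by decide, by decide⟩
  intro v hv
  have h1 : v ≤ 12 := by have := le_abs_self v; push_cast at hv; omega
  have h2 : -12 ≤ v := by have := neg_abs_le v; push_cast at hv; omega
  have key : ∀ v ∈ Finset.Icc (-12 : ℤ) 12, ∃ i j, sq5 i j = v := by decide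
  exact key v (by rw [Finset.mem_Icc]; omega)

lemma magicF_le (h k : ℕ) (hh : 1 ≤ h) (hk : h ≤ k) :
    ∃ M, MagicF (2 * h + 1) (2 * k + 1) M := by
  by_cases hk3 : 3 ≤ k
  · obtain ⟨M, hM, _⟩ := magic_all k h hk3 hh hk
    exact ⟨_, magicF_of_magicZ _ _ M hM⟩
  · rcases (by omega : (h = 1 ∧ k = 1) ∨ (h = 1 ∧ k = 2) ∨ (h = 2 ∧ k = 2)) with
      ⟨rfl, rfl⟩ | ⟨rfl, rfl⟩ | ⟨rfl, rfl⟩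
    · exact ⟨_, magic_sq3⟩
    · obtain ⟨M, hM, _⟩ := magic_base_all 2 le_rfl
      exact ⟨_, magicF_of_magicZ _ _ M hM⟩
    · exact ⟨_, magic_sq5⟩

/-- Magic rectangles exist for all odd side lengths at least three. -/
lemma magicF_exists (h k : ℕ) (hh : 1 ≤ h) (hk : 1 ≤ k) :
    ∃ M, MagicF (2 * h + 1) (2 * k + 1) M := by
  by_cases hle : h ≤ k
  · exact magicF_le h k hh hle
  · obtain ⟨M, h1, h2, h3⟩ := magicF_le k h hk (by omega)
    refine ⟨fun i j => M j i, ?_, h3, h2⟩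
    intro v hv
    obtain ⟨i, j, hij⟩ := h1 v (by rw [mul_comm ((2 * k + 1 : ℕ) : ℤ)]; exact hv)
    exact ⟨j, i, hij⟩

lemma magicF_bound (p m : ℕ) (M : Fin p → Fin m → ℤ) (hM : MagicF p m M) (N : ℕ)
    (hN : p * m = 2 * N + 1) (i : Fin p) (j : Fin m) : |M i j| ≤ N := by
  have hsub : Finset.Icc (-(N : ℤ)) N ⊆
      (Finset.univ : Finset (Fin p × Fin m)).image (fun x => M x.1 x.2) := by
    intro v hv
    rw [Finset.mem_Icc] at hv
    have : |v| ≤ N := abs_le.mpr hv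
    have hN' : (p : ℤ) * m = 2 * N + 1 := by exact_mod_cast hN
    obtain ⟨i, j, h⟩ := hM.1 v (by omega)
    exact Finset.mem_image.mpr ⟨(i, j), Finset.mem_univ _, h⟩
  have heq := Finset.eq_of_subset_of_card_le hsub (by
    refine Finset.card_image_le.trans ?_
    rw [Int.card_Icc, Finset.card_univ, Fintype.card_prod, Fintype.card_fin, Fintype.card_fin, hN]
    omega)
  have : M i j ∈ Finset.Icc (-(N : ℤ)) N := by
    rw [heq]
    exact Finset.mem_image.mpr ⟨(i, j), Finset.mem_univ _, rfl⟩
  rw [Finset.mem_Icc] at this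
  exact abs_le.mpr this



section join

lemma joinG_ll {α β : Type*} (G : SimpleGraph α) (H : SimpleGraph β) (a b : α) :
    (joinG G H).Adj (Sum.inl a) (Sum.inl b) ↔ G.Adj a b := by
  simp only [joinG, SimpleGraph.fromRel_adj]
  constructor
  · rintro ⟨_, h⟩
    simp at h
    rcases h with h | h
    · exact h
    · exact h.symm
  · intro h
    refine ⟨fun h' => h.ne (Sum.inl.inj h'), Or.inl (Or.inl ⟨a, b, rfl, rfl, h⟩)⟩

lemma joinG_rr {α β : Type*} (G : SimpleGraph α) (H : SimpleGraph β) (a b : β) :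
    (joinG G H).Adj (Sum.inr a) (Sum.inr b) ↔ H.Adj a b := by
  simp only [joinG, SimpleGraph.fromRel_adj]
  constructor
  · rintro ⟨_, h⟩
    simp at h
    rcases h with h | h
    · exact h
    · exact h.symm
  · intro h
    refine ⟨fun h' => h.ne (Sum.inr.inj h'), Or.inl (Or.inr (Or.inl ⟨a, b, rfl, rfl, h⟩))⟩

lemma joinG_lr {α β : Type*} (G : SimpleGraph α) (H : SimpleGraph β) (a : α) (b : β) :
    (joinG G H).Adj (Sum.inl a) (Sum.inr b) := by
  simp [joinG, SimpleGraph.fromRel_adj]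

lemma vertexWeight_eq {V : Type*} [Fintype V] (G : SimpleGraph V) (f : Sym2 V → ℕ) (x : V) :
    vertexWeight G f x = ∑ y, if G.Adj x y then f s(x, y) else 0 := by
  unfold vertexWeight
  rw [← Finset.sum_filter]
  symm
  refine Finset.sum_bij (fun y _ => s(x, y)) ?_ ?_ ?_ ?_
  · intro y hy
    simp at hy
    simp [hy]
  · intro a _ b _ h
    exact Sym2.congr_right.mp h
  · intro e he
    simp only [Finset.mem_filter, SimpleGraph.mem_edgeFinset] at he
    obtain ⟨h1, h2⟩ := he
    obtain ⟨y, rfl⟩ := Sym2.mem_iff_exists.mp h2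
    exact ⟨y, by simpa using h1, rfl⟩
  · intro _ _
    rfl

/-- The labeling of the join. -/
noncomputable def joinLabel {V : Type*} {n : ℕ} (f : Sym2 V → ℕ) (W : V → Fin (n + 3) → ℕ)
    (C : Fin (n + 3) → ℕ) : Sym2 (V ⊕ Fin (n + 3)) → ℕ :=
  Sym2.lift ⟨fun x y =>
    match x, y with
    | Sum.inl a, Sum.inl b => f s(a, b)
    | Sum.inl a, Sum.inr j => W a j
    | Sum.inr j, Sum.inl a => W a j
    | Sum.inr i, Sum.inr j => (if j = i + 1 then C i else 0) + (if i = j + 1 then C j else 0), by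
    rintro (a | i) (b | j)
    · simp only [Sym2.eq_swap]
    · rfl
    · rfl
    · simp only [add_comm]⟩

lemma cyc_adj {n : ℕ} (i j : Fin (n + 3)) :
    (cycleGraph (n + 3)).Adj i j ↔ (j = i + 1 ∨ i = j + 1) := by
  rw [SimpleGraph.cycleGraph_adj (n := n + 1)]
  constructor
  · rintro (h | h)
    · right; rw [← h]; abel
    · left; rw [← h]; abel
  · rintro (h | h)
    · right; rw [h]; abel
    · left; rw [h]; abel

lemma fin_two_ne {n : ℕ} (i : Fin (n + 3)) : i ≠ i + 1 + 1 := by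
  intro h
  have h2 : (1 : Fin (n + 3)) + 1 = 0 := by
    have : i + (1 + 1) = i + 0 := by rw [← add_assoc, ← h, add_zero]
    exact add_left_cancel this
  have := congrArg Fin.val h2
  simp [Fin.val_add] at this
  rw [Nat.mod_eq_of_lt (by omega)] at this
  omega

lemma weight_inl {V : Type*} [Fintype V] (G : SimpleGraph V) {n : ℕ} (f : Sym2 V → ℕ)
    (W : V → Fin (n + 3) → ℕ) (C : Fin (n + 3) → ℕ) (a : V) :
    vertexWeight (joinG G (cycleGraph (n + 3))) (joinLabel f W C) (Sum.inl a)
      = vertexWeight G f a + ∑ j, W a j := by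
  rw [vertexWeight_eq, vertexWeight_eq, Fintype.sum_sum_type]
  congr 1
  · refine Finset.sum_congr rfl fun b _ => ?_
    simp only [joinG_ll]
    rfl
  · refine Finset.sum_congr rfl fun b _ => ?_
    rw [if_pos (joinG_lr _ _ _ _)]
    rfl

lemma weight_inr {V : Type*} [Fintype V] (G : SimpleGraph V) {n : ℕ} (f : Sym2 V → ℕ)
    (W : V → Fin (n + 3) → ℕ) (C : Fin (n + 3) → ℕ) (j : Fin (n + 3)) :
    vertexWeight (joinG G (cycleGraph (n + 3))) (joinLabel f W C) (Sum.inr j)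
      = ∑ a, W a j + (C j + C (j - 1)) := by
  rw [vertexWeight_eq, Fintype.sum_sum_type]
  congr 1
  · refine Finset.sum_congr rfl fun b _ => ?_
    rw [if_pos (joinG_lr _ _ _ _).symm]
    rfl
  · have : ∀ i : Fin (n + 3), (if (joinG G (cycleGraph (n + 3))).Adj (Sum.inr j) (Sum.inr i) then
        joinLabel f W C s(Sum.inr j, Sum.inr i) else 0)
        = (if i = j + 1 then C j else 0) + (if i = j - 1 then C i else 0) := by
      intro i
      have hl : joinLabel f W C s(Sum.inr j, Sum.inr i) =
        (if i = j + 1 then C j else 0) + (if j = i + 1 then C i else 0) := rfl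
      have he : j = i + 1 ↔ i = j - 1 := eq_comm.trans eq_sub_iff_add_eq.symm
      rw [joinG_rr, cyc_adj, hl]
      simp only [he]
      split_ifs with h1 h2 h3 <;> tauto
    rw [Finset.sum_congr rfl fun i _ => this i, Finset.sum_add_distrib]
    simp

lemma join_upper {V : Type*} [Fintype V] (G : SimpleGraph V) (n e p t : ℕ)
    (hp : Fintype.card V = p) (he : G.edgeSet.ncard = e)
    (f : Sym2 V → ℕ) (hf : IsLocalAntimagic G f) (hcf : colorCount G f = t)
    (W : V → Fin (n + 3) → ℕ) (C : Fin (n + 3) → ℕ)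
    (hsurj : ∀ v, e + 1 ≤ v → v ≤ e + p * (n + 3) + (n + 3) →
      (∃ a j, W a j = v) ∨ ∃ j, C j = v)
    (ρ : ℕ) (hρ : ∀ a, ∑ j, W a j = ρ) (κ : Fin (n + 3) → ℕ)
    (hκ : ∀ j, ∑ a, W a j + (C j + C (j - 1)) = κ j)
    (hadj : ∀ j, κ j ≠ κ (j + 1))
    (A B D : ℕ) (h3 : ∀ j, κ j = A ∨ κ j = B ∨ κ j = D)
    (hne : ∀ u j, vertexWeight G f u + ρ ≠ κ j) :
    ∃ g, IsLocalAntimagic (joinG G (cycleGraph (n + 3))) g ∧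
      colorCount (joinG G (cycleGraph (n + 3))) g ≤ t + 3 := by
  set H := joinG G (cycleGraph (n + 3)) with hH
  have hwl : ∀ a, vertexWeight H (joinLabel f W C) (Sum.inl a) = vertexWeight G f a + ρ := by
    intro a; rw [hH, weight_inl, hρ]
  have hwr : ∀ j, vertexWeight H (joinLabel f W C) (Sum.inr j) = κ j := by
    intro a; rw [hH, weight_inr, hκ]
  refine ⟨joinLabel f W C, ⟨?_, ?_⟩, ?_⟩
  · -- bijectivity by counting
    have hcardle : H.edgeFinset.card ≤ e + p * (n + 3) + (n + 3) := by
      have hsub : H.edgeFinset ⊆ (G.edgeFinset.image (Sym2.map Sum.inl) ∪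
          (Finset.univ : Finset (V × Fin (n + 3))).image (fun x => s(Sum.inl x.1, Sum.inr x.2))) ∪
          (Finset.univ : Finset (Fin (n + 3))).image (fun j => s(Sum.inr j, Sum.inr (j + 1))) := by
        intro x hx
        rw [SimpleGraph.mem_edgeFinset] at hx
        induction x using Sym2.ind with
        | _ x y =>
          rw [SimpleGraph.mem_edgeSet] at hx
          rcases x with a | i <;> rcases y with b | j
          · refine Finset.mem_union_left _ (Finset.mem_union_left _ ?_)
            rw [Finset.mem_image]
            exact ⟨s(a, b), by rw [SimpleGraph.mem_edgeFinset]; exact (joinG_ll _ _ _ _).mp hx, rfl⟩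
          · refine Finset.mem_union_left _ (Finset.mem_union_right _ ?_)
            rw [Finset.mem_image]
            exact ⟨(a, j), Finset.mem_univ _, rfl⟩
          · refine Finset.mem_union_left _ (Finset.mem_union_right _ ?_)
            rw [Finset.mem_image]
            exact ⟨(b, i), Finset.mem_univ _, Sym2.eq_swap⟩
          · refine Finset.mem_union_right _ ?_
            rw [Finset.mem_image]
            rcases (cyc_adj i j).mp ((joinG_rr _ _ _ _).mp hx) with h | h
            · exact ⟨i, Finset.mem_univ _, by rw [h]⟩
            · exact ⟨j, Finset.mem_univ _, by rw [h]; exact Sym2.eq_swap⟩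
      refine (Finset.card_le_card hsub).trans ((Finset.card_union_le _ _).trans
        (Nat.add_le_add ((Finset.card_union_le _ _).trans (Nat.add_le_add ?_ ?_)) ?_))
      · refine Finset.card_image_le.trans ?_
        rw [← he, ← SimpleGraph.coe_edgeFinset, Set.ncard_coe_finset]
      · refine Finset.card_image_le.trans ?_
        rw [Finset.card_univ, Fintype.card_prod, hp, Fintype.card_fin]
      · refine Finset.card_image_le.trans ?_
        rw [Finset.card_univ, Fintype.card_fin]
    have hsub2 : Finset.Icc 1 (e + p * (n + 3) + (n + 3)) ⊆
        H.edgeFinset.image (joinLabel f W C) := by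
      intro v hv
      rw [Finset.mem_Icc] at hv
      rw [Finset.mem_image]
      by_cases hve : v ≤ e
      · have hv' : v ∈ Set.Icc 1 G.edgeSet.ncard := ⟨hv.1, by omega⟩
        obtain ⟨x, hx, hxv⟩ := hf.1.surjOn hv'
        induction x using Sym2.ind with
        | _ x y =>
          refine ⟨s(Sum.inl x, Sum.inl y), ?_, hxv⟩
          rw [SimpleGraph.mem_edgeFinset]
          exact (joinG_ll _ _ _ _).mpr hx
      · rcases hsurj v (by omega) hv.2 with ⟨a, j, h⟩ | ⟨j, h⟩
        · refine ⟨s(Sum.inl a, Sum.inr j), ?_, h⟩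
          rw [SimpleGraph.mem_edgeFinset]
          exact joinG_lr _ _ _ _
        · refine ⟨s(Sum.inr j, Sum.inr (j + 1)), ?_, ?_⟩
          · rw [SimpleGraph.mem_edgeFinset]
            exact (joinG_rr _ _ _ _).mpr ((cyc_adj _ _).mpr (Or.inl rfl))
          · have hl : joinLabel f W C s(Sum.inr j, Sum.inr (j + 1)) =
              (if j + 1 = j + 1 then C j else 0) + (if j = j + 1 + 1 then C (j + 1) else 0) := rfl
            rw [hl, if_pos rfl, if_neg (fin_two_ne j), h, add_zero]
    have hc1 := Finset.card_le_card hsub2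
    rw [Nat.card_Icc] at hc1
    have hc2 : (H.edgeFinset.image (joinLabel f W C)).card ≤ H.edgeFinset.card :=
      Finset.card_image_le
    have hq : H.edgeFinset.card = e + p * (n + 3) + (n + 3) := by omega
    have hq' : H.edgeSet.ncard = e + p * (n + 3) + (n + 3) := by
      rw [← hq, ← SimpleGraph.coe_edgeFinset, Set.ncard_coe_finset]
    have heq := Finset.eq_of_subset_of_card_le hsub2 (by rw [Nat.card_Icc]; omega)
    have hinj : Set.InjOn (joinLabel f W C) H.edgeFinset :=
      Finset.card_image_iff.mp (by omega)
    rw [SimpleGraph.coe_edgeFinset] at hinj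
    refine ⟨?_, hinj, ?_⟩
    · intro x hx
      have : joinLabel f W C x ∈ H.edgeFinset.image (joinLabel f W C) :=
        Finset.mem_image_of_mem _ (SimpleGraph.mem_edgeFinset.mpr hx)
      rw [← heq, Finset.mem_Icc] at this
      rw [hq']
      exact this
    · intro v hv
      rw [hq'] at hv
      have : v ∈ H.edgeFinset.image (joinLabel f W C) := by
        rw [← heq, Finset.mem_Icc]
        exact hv
      obtain ⟨x, hx, h⟩ := Finset.mem_image.mp this
      exact ⟨x, SimpleGraph.mem_edgeFinset.mp hx, h⟩
  · rintro (a | i) (b | j) hab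
    · rw [hwl, hwl]
      have := hf.2 ((joinG_ll _ _ _ _).mp hab)
      omega
    · rw [hwl, hwr]
      exact hne a j
    · rw [hwl, hwr]
      exact (hne b i).symm
    · rw [hwr, hwr]
      rcases (cyc_adj i j).mp ((joinG_rr _ _ _ _).mp hab) with h | h
      · rw [h]; exact hadj i
      · rw [h]; exact (hadj j).symm
  · unfold colorCount
    have hsub : Finset.univ.image (vertexWeight H (joinLabel f W C)) ⊆
        (Finset.univ.image (vertexWeight G f)).image (fun x => x + ρ) ∪ {A, B, D} := by
      intro x hx
      obtain ⟨y, _, rfl⟩ := Finset.mem_image.mp hx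
      rcases y with a | j
      · rw [hwl]
        exact Finset.mem_union_left _ (Finset.mem_image_of_mem _
          (Finset.mem_image_of_mem _ (Finset.mem_univ _)))
      · rw [hwr]
        refine Finset.mem_union_right _ ?_
        simpa using h3 j
    refine (Finset.card_le_card hsub).trans ((Finset.card_union_le _ _).trans
      (Nat.add_le_add ?_ Finset.card_le_three))
    rw [← hcf]
    exact Finset.card_image_le

lemma join_lower {V : Type*} [Fintype V] (G : SimpleGraph V) (m t : ℕ)
    (hchi : G.chromaticNumber = (t : ℕ∞)) (hm : 3 ≤ m) (hmodd : Odd m)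
    (g : Sym2 (V ⊕ Fin m) → ℕ) (hg : IsLocalAntimagic (joinG G (cycleGraph m)) g) :
    t + 3 ≤ colorCount (joinG G (cycleGraph m)) g := by
  set w := vertexWeight (joinG G (cycleGraph m)) g with hw
  have h1 : t ≤ (Finset.univ.image (fun a : V => w (Sum.inl a))).card := by
    have hc : G.Colorable (Finset.univ.image (fun a : V => w (Sum.inl a))).card := by
      have C : G.Coloring (Finset.univ.image (fun a : V => w (Sum.inl a))) :=
        SimpleGraph.Coloring.mk (fun a => ⟨w (Sum.inl a), Finset.mem_image_of_mem
          (fun a : V => w (Sum.inl a)) (Finset.mem_univ a)⟩) (by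
          intro a b hab h
          exact hg.2 ((joinG_ll _ _ _ _).mpr hab) (congrArg Subtype.val h))
      simpa using C.colorable
    have := hc.chromaticNumber_le
    rw [hchi] at this
    exact_mod_cast this
  have h2 : 3 ≤ (Finset.univ.image (fun a : Fin m => w (Sum.inr a))).card := by
    have hc : (cycleGraph m).Colorable
        (Finset.univ.image (fun a : Fin m => w (Sum.inr a))).card := by
      have C : (cycleGraph m).Coloring (Finset.univ.image (fun a : Fin m => w (Sum.inr a))) :=
        SimpleGraph.Coloring.mk (fun a => ⟨w (Sum.inr a), Finset.mem_image_of_mem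
          (fun a : Fin m => w (Sum.inr a)) (Finset.mem_univ a)⟩) (by
          intro a b hab h
          exact hg.2 ((joinG_rr _ _ _ _).mpr hab) (congrArg Subtype.val h))
      simpa using C.colorable
    have := hc.chromaticNumber_le
    rw [SimpleGraph.chromaticNumber_cycleGraph_of_odd m (by omega) hmodd] at this
    exact_mod_cast this
  have hdisj : Disjoint (Finset.univ.image (fun a : V => w (Sum.inl a)))
      (Finset.univ.image (fun a : Fin m => w (Sum.inr a))) := by
    rw [Finset.disjoint_left]
    intro x hx hy
    obtain ⟨a, _, ha⟩ := Finset.mem_image.mp hx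
    obtain ⟨b, _, hb⟩ := Finset.mem_image.mp hy
    exact hg.2 (joinG_lr G (cycleGraph m) a b) (ha.trans hb.symm)
  have hsub : Finset.univ.image (fun a : V => w (Sum.inl a)) ∪
      Finset.univ.image (fun a : Fin m => w (Sum.inr a)) ⊆ Finset.univ.image w := by
    intro x hx
    rcases Finset.mem_union.mp hx with h | h <;>
    · obtain ⟨a, _, ha⟩ := Finset.mem_image.mp h
      rw [← ha]
      exact Finset.mem_image_of_mem _ (Finset.mem_univ _)
  have := Finset.card_le_card hsub
  rw [Finset.card_union_of_disjoint hdisj] at this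
  change t + 3 ≤ (Finset.univ.image w).card
  omega

end join


section final

lemma fin_pred_val {n : ℕ} (j : Fin (n + 3)) :
    (j - 1).val = if j.val = 0 then n + 2 else j.val - 1 := by
  have hj := j.isLt
  rw [Fin.val_sub]
  have h1 : ((1 : Fin (n + 3)) : ℕ) = 1 := rfl
  rw [h1]
  split_ifs with h
  · rw [h, Nat.mod_eq_of_lt (by omega)]
    omega
  · have : n + 3 - 1 + j.val = (j.val - 1) + (n + 3) := by omega
    rw [this, Nat.add_mod_right, Nat.mod_eq_of_lt (by omega)]

lemma fin_succ_val {n : ℕ} (j : Fin (n + 3)) :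
    (j + 1).val = if j.val = n + 2 then 0 else j.val + 1 := by
  have hj := j.isLt
  rw [Fin.val_add]
  have h1 : ((1 : Fin (n + 3)) : ℕ) = 1 := rfl
  rw [h1]
  split_ifs with h
  · rw [h]
    exact Nat.mod_self _
  · rw [Nat.mod_eq_of_lt (by omega)]

/-- The three-valued pattern around an odd cycle. -/
def tri (A B D j : ℕ) : ℕ := if j = 0 then A else if j % 2 = 1 then B else D

lemma tri_adj {κ : ℕ} (A B D : ℕ) (hAB : A ≠ B) (hBD : B ≠ D) (hAD : A ≠ D)
    (j : Fin (2 * κ + 3)) : tri A B D j.val ≠ tri A B D (j + 1).val := by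
  have hj := j.isLt
  rw [fin_succ_val]
  unfold tri
  split_ifs <;> first | omega | assumption | contradiction | (symm; assumption)

lemma tri_mem (A B D j : ℕ) : tri A B D j = A ∨ tri A B D j = B ∨ tri A B D j = D := by
  unfold tri
  split_ifs <;> simp

lemma upper_big {V : Type*} [Fintype V] (G : SimpleGraph V) (h κ e t : ℕ) (hh : 1 ≤ h)
    (hp : Fintype.card V = 2 * h + 1) (he : G.edgeSet.ncard = e)
    (f : Sym2 V → ℕ) (hf : IsLocalAntimagic G f) (hcf : colorCount G f = t)
    (N : ℕ) (hN : (2 * h + 1) * (2 * κ + 3) = 2 * N + 1)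
    (hne : ∀ u, ∀ c, (c = 2 * κ + 3 ∨ c = 2 * κ + 4 ∨ c = 3 * κ + 5) →
      vertexWeight G f u + (2 * κ + 3) * (e + N + 1) ≠
        (2 * h + 1) * (e + N + 1) + (2 * (e + (2 * N + 1)) + c)) :
    ∃ g, IsLocalAntimagic (joinG G (cycleGraph (2 * κ + 3))) g ∧
      colorCount (joinG G (cycleGraph (2 * κ + 3))) g ≤ t + 3 := by
  obtain ⟨M, hM⟩ := magicF_exists h (κ + 1) hh (by omega)
  have hN' : (2 * h + 1) * (2 * (κ + 1) + 1) = 2 * N + 1 := by rw [← hN]; ring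
  have hb := magicF_bound _ _ M hM N hN'
  obtain ⟨hs, hr, hc⟩ := hM
  let φ : V ≃ Fin (2 * h + 1) := Fintype.equivFinOfCardEq hp
  let W : V → Fin (2 * κ + 3) → ℕ := fun a j => ((e + N + 1 : ℤ) + M (φ a) j).toNat
  have hW : ∀ a j, (W a j : ℤ) = (e + N + 1 : ℤ) + M (φ a) j := by
    intro a j
    have := abs_le.mp (hb (φ a) j)
    exact Int.toNat_of_nonneg (by omega)
  let C : Fin (2 * κ + 3) → ℕ := fun j =>
    if j.val % 2 = 0 then e + (2 * N + 1) + (2 * κ + 3) - j.val / 2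
    else e + (2 * N + 1) + 1 + j.val / 2
  let P := (2 * h + 1) * (e + N + 1)
  let L := e + (2 * N + 1)
  refine join_upper G (2 * κ) e (2 * h + 1) t hp he f hf hcf W C ?_
    ((2 * κ + 3) * (e + N + 1)) ?_
    (fun j => tri (P + (2 * L + (3 * κ + 5))) (P + (2 * L + (2 * κ + 4)))
      (P + (2 * L + (2 * κ + 3))) j.val) ?_ ?_
      (P + (2 * L + (3 * κ + 5))) (P + (2 * L + (2 * κ + 4)))
      (P + (2 * L + (2 * κ + 3))) ?_ ?_
  · intro v hv1 hv2
    rw [hN] at hv2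
    by_cases hvL : v ≤ e + (2 * N + 1)
    · left
      obtain ⟨i, j, hij⟩ := hs ((v : ℤ) - (e + N + 1)) (by
        have h1 : |(v : ℤ) - (e + N + 1)| ≤ N := abs_le.mpr ⟨by omega, by omega⟩
        have h2 : ((2 * h + 1 : ℕ) : ℤ) * ((2 * (κ + 1) + 1 : ℕ) : ℤ) = 2 * N + 1 := by
          exact_mod_cast hN'
        rw [h2]; omega)
      refine ⟨φ.symm i, j, ?_⟩
      have := hW (φ.symm i) j
      rw [Equiv.apply_symm_apply, hij] at this
      omega
    · right
      by_cases hv3 : v ≤ e + (2 * N + 1) + (κ + 1)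
      · refine ⟨⟨2 * (v - (e + (2 * N + 1) + 1)) + 1, by omega⟩, ?_⟩
        simp only [C]
        rw [if_neg (by omega)]
        omega
      · refine ⟨⟨2 * (e + (2 * N + 1) + (2 * κ + 3) - v), by omega⟩, ?_⟩
        simp only [C]
        rw [if_pos (by omega)]
        omega
  · intro a
    have : ((∑ j, W a j : ℕ) : ℤ) = (((2 * κ + 3) * (e + N + 1) : ℕ) : ℤ) := by
      push_cast
      rw [Finset.sum_congr rfl fun j _ => hW a j, Finset.sum_add_distrib]
      have h0 : ∑ j : Fin (2 * κ + 3), M (φ a) j = 0 := hr (φ a)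
      rw [h0]
      simp
    exact_mod_cast this
  · intro j
    have hj := j.isLt
    have h1 : ∑ a, W a j = P := by
      have : ((∑ a, W a j : ℕ) : ℤ) = (((2 * h + 1) * (e + N + 1) : ℕ) : ℤ) := by
        push_cast
        rw [Finset.sum_congr rfl fun a _ => hW a j, Finset.sum_add_distrib,
          Equiv.sum_comp φ (fun i => M i j)]
        have h0 : ∑ i, M i j = 0 := hc j
        rw [h0]
        simp [hp]
      exact_mod_cast this
    rw [h1]
    simp only [C, tri, fin_pred_val, L]
    split_ifs <;> omega
  · exact fun j => tri_adj _ _ _ (by omega) (by omega) (by omega) j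
  · exact fun j => tri_mem _ _ _ _
  · intro u j
    rcases tri_mem (P + (2 * L + (3 * κ + 5))) (P + (2 * L + (2 * κ + 4)))
      (P + (2 * L + (2 * κ + 3))) j.val with h | h | h
    all_goals
      simp only [h]
      exact hne u _ (by simp)

lemma upper_one {V : Type*} [Fintype V] (G : SimpleGraph V) (κ t : ℕ)
    (hp : Fintype.card V = 1) (he : G.edgeSet.ncard = 0)
    (f : Sym2 V → ℕ) (hf : IsLocalAntimagic G f) (hcf : colorCount G f = t) :
    ∃ g, IsLocalAntimagic (joinG G (cycleGraph (2 * κ + 3))) g ∧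
      colorCount (joinG G (cycleGraph (2 * κ + 3))) g ≤ t + 3 := by
  let S : Fin (2 * κ + 3) → ℕ := fun j =>
    if j.val = 0 then 4 * κ + 6 else if j.val % 2 = 1 then 4 * κ + 5 - j.val
    else 4 * κ + 7 - j.val
  let C : Fin (2 * κ + 3) → ℕ := fun j =>
    if j.val % 2 = 0 then j.val / 2 + 1 else κ + 3 + j.val / 2
  refine join_upper G (2 * κ) 0 1 t hp he f hf hcf (fun _ j => S j) C ?_
    (∑ j, S j) (fun _ => rfl)
    (fun j => tri (5 * κ + 9) (5 * κ + 8) (5 * κ + 10) j.val) ?_ ?_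
      (5 * κ + 9) (5 * κ + 8) (5 * κ + 10) ?_ ?_
  · intro v hv1 hv2
    obtain ⟨a⟩ : Nonempty V := Fintype.card_pos_iff.mp (by omega)
    by_cases h1 : v ≤ κ + 2
    · right
      refine ⟨⟨2 * (v - 1), by omega⟩, ?_⟩
      simp only [C]
      rw [if_pos (by omega)]
      omega
    by_cases h2 : v ≤ 2 * κ + 3
    · right
      refine ⟨⟨2 * (v - (κ + 3)) + 1, by omega⟩, ?_⟩
      simp only [C]
      rw [if_neg (by omega)]
      omega
    left
    refine ⟨a, ?_⟩
    by_cases h3 : v = 4 * κ + 6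
    · refine ⟨⟨0, by omega⟩, ?_⟩
      simp [S, h3]
    by_cases h4 : v % 2 = 0
    · refine ⟨⟨4 * κ + 5 - v, by omega⟩, ?_⟩
      simp only [S]
      rw [if_neg (by omega), if_pos (by omega)]
      omega
    · refine ⟨⟨4 * κ + 7 - v, by omega⟩, ?_⟩
      simp only [S]
      rw [if_neg (by omega), if_neg (by omega)]
      omega
  · intro j
    have hj := j.isLt
    simp only [Finset.sum_const, Finset.card_univ, hp, one_smul]
    simp only [C, S, tri, fin_pred_val]
    split_ifs <;> omega
  · exact fun j => tri_adj _ _ _ (by omega) (by omega) (by omega) j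
  · exact fun j => tri_mem _ _ _ _
  · intro u j
    have hS : (2 * κ + 3) * (2 * κ + 4) ≤ ∑ j, S j := by
      have := Finset.card_nsmul_le_sum Finset.univ S (2 * κ + 4) (by
        intro j _
        have hj := j.isLt
        simp only [S]
        split_ifs <;> omega)
      simpa using this
    have hlt : 5 * κ + 10 < (2 * κ + 3) * (2 * κ + 4) := by nlinarith
    rcases tri_mem (5 * κ + 9) (5 * κ + 8) (5 * κ + 10) j.val with h | h | h
    all_goals
      simp only [h]
      omega

end final

/-- Theorem: Let `G` be a graph of odd order `p` and size `e` with `χ(G) = χ_la(G) = t`,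
witnessed by a local antimagic labeling `f` with `c(f) = t = χ(G)`. Let `m ≥ 3` be odd. If for
every vertex `u`, `f⁺(u)` avoids the three stated values, then `χ_la(G ∨ C_m) = χ_la(G) + 3`.
(The avoided-value conditions are stated multiplied by 2 over `ℤ`, which is equivalent since
the parity hypotheses make the relevant quantities even.) -/
theorem chiLA_join_cycle {V : Type*} [Fintype V] (G : SimpleGraph V) (p e m t : ℕ)
    (hp : Fintype.card V = p) (hpodd : Odd p)
    (he : G.edgeSet.ncard = e)
    (hchi : G.chromaticNumber = (t : ℕ∞)) (hla : chiLA G = t)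
    (f : Sym2 V → ℕ) (hf : IsLocalAntimagic G f) (hcf : colorCount G f = t)
    (hm : 3 ≤ m) (hmodd : Odd m)
    (hne : ∀ u : V,
      2 * (vertexWeight G f u : ℤ) ≠
        ((p : ℤ) - m) * (2 * (e : ℤ) + (p : ℤ) * m + 1) + 4 * ((e : ℤ) + (p : ℤ) * m) + 2 * m ∧
      2 * (vertexWeight G f u : ℤ) ≠
        ((p : ℤ) - m) * (2 * (e : ℤ) + (p : ℤ) * m + 1) + 4 * ((e : ℤ) + (p : ℤ) * m) + 2 * m + 2 ∧
      2 * (vertexWeight G f u : ℤ) ≠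
        ((p : ℤ) - m) * (2 * (e : ℤ) + (p : ℤ) * m + 1) + 4 * ((e : ℤ) + (p : ℤ) * m)
          + (3 * (m : ℤ) + 1)) :
    chiLA (joinG G (cycleGraph m)) = chiLA G + 3 := by
  obtain ⟨h, rfl⟩ := hpodd
  obtain ⟨κ', rfl⟩ := hmodd
  obtain ⟨κ, rfl⟩ : ∃ κ, κ' = κ + 1 := ⟨κ' - 1, by omega⟩
  have hmodd : Odd (2 * (κ + 1) + 1) := ⟨κ + 1, rfl⟩
  have hup : ∃ g, IsLocalAntimagic (joinG G (cycleGraph (2 * (κ + 1) + 1))) g ∧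
      colorCount (joinG G (cycleGraph (2 * (κ + 1) + 1))) g ≤ t + 3 := by
    rcases Nat.eq_zero_or_pos h with h0 | h0
    · subst h0
      have hsub : Subsingleton V := Fintype.card_le_one_iff_subsingleton.mp (by omega)
      have hG : G.edgeSet.ncard = 0 := by
        have : G.edgeSet = ∅ := by
          rw [SimpleGraph.edgeSet_eq_empty]
          exact Subsingleton.elim _ _
        rw [this, Set.ncard_empty]
      exact upper_one G κ t (by omega) hG f hf hcf
    · obtain ⟨N, hN⟩ : ∃ N, (2 * h + 1) * (2 * κ + 3) = 2 * N + 1 :=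
        ⟨2 * h * κ + 3 * h + κ + 1, by ring⟩
      refine upper_big G h κ e t h0 hp he f hf hcf N hN ?_
      intro u c hc heq
      obtain ⟨h1, h2, h3⟩ := hne u
      have hNz : ((2 * h + 1 : ℕ) : ℤ) * ((2 * (κ + 1) + 1 : ℕ) : ℤ) = 2 * N + 1 := by
        have : (2 * h + 1) * (2 * (κ + 1) + 1) = 2 * N + 1 := by rw [← hN]; ring
        exact_mod_cast this
      rw [hNz] at h1 h2 h3
      have hz : (vertexWeight G f u : ℤ) + (2 * κ + 3) * (e + N + 1) =
        (2 * h + 1) * (e + N + 1) + (2 * (e + (2 * N + 1)) + c) := by exact_mod_cast heq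
      push_cast at h1 h2 h3
      rcases hc with rfl | rfl | rfl
      · apply h1
        push_cast at hz
        linear_combination 2 * hz
      · apply h2
        push_cast at hz
        linear_combination 2 * hz
      · apply h3
        push_cast at hz
        linear_combination 2 * hz
  obtain ⟨g, hg, hgc⟩ := hup
  rw [hla]
  apply le_antisymm
  · refine le_trans ?_ hgc
    unfold chiLA
    exact Nat.sInf_le ⟨g, hg, rfl⟩
  · have hmem := Nat.sInf_mem (s := { n | ∃ f, IsLocalAntimagic
      (joinG G (cycleGraph (2 * (κ + 1) + 1))) f ∧
      colorCount (joinG G (cycleGraph (2 * (κ + 1) + 1))) f = n }) ⟨_, g, hg, rfl⟩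
    obtain ⟨g', hg', hgc'⟩ := hmem
    have hlow := join_lower G _ t hchi hm hmodd g' hg'
    rw [hgc'] at hlow
    exact hlow
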